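/- The ordinary generating function Σ_{n≥2} #F_n^0 · t^n equals 2t²/(1 − 2t), and Σ_{n≥3} #F_n^1 · t^n equals 2t³/((1 − 2t)²(1 − 4t)), as identities of formal power series (equivalently, of functions on a neighborhood of 0). -/

import Mathlib

open scoped Classical

noncomputable def numKinks {n : ℕ} (π : Equiv.Perm (Fin n)) : ℕ :=
  (Finset.univ.filter (fun i : Fin n =>
    0 < (i : ℕ) ∧ ∀ j : Fin n, (j : ℕ) < (i : ℕ) →
      (π j : ℕ) + 1 ≠ (π i : ℕ) ∧ (π i : ℕ) + 1 ≠ (π j : ℕ))).card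

noncomputable def F (n d : ℕ) : ℕ :=
  (Finset.univ.filter (fun π : Equiv.Perm (Fin n) => numKinks π = d)).card

/-- left neighbour earlier -/
def LeftE {n : ℕ} (π : Equiv.Perm (Fin n)) (i : Fin n) : Prop :=
  ∃ j : Fin n, (j : ℕ) < i ∧ (π j : ℕ) + 1 = π i

/-- right neighbour earlier -/
def RightE {n : ℕ} (π : Equiv.Perm (Fin n)) (i : Fin n) : Prop :=
  ∃ j : Fin n, (j : ℕ) < i ∧ (π i : ℕ) + 1 = π j

/-- append a new last entry `x` -/
def insFun {n : ℕ} (x : Fin (n+1)) (π : Equiv.Perm (Fin n)) : Fin (n+1) → Fin (n+1) :=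
  Fin.snoc (α := fun _ => Fin (n+1)) (fun i => x.succAbove (π i)) x

theorem insFun_inj {n : ℕ} (x : Fin (n+1)) (π : Equiv.Perm (Fin n)) :
    Function.Injective (insFun x π) := by
  intro a b h
  induction a using Fin.lastCases with
  | last =>
    induction b using Fin.lastCases with
    | last => rfl
    | cast b => simp [insFun] at h
  | cast a =>
    induction b using Fin.lastCases with
    | last => simp [insFun] at h
    | cast b => simpa [insFun] using h

noncomputable def ins {n : ℕ} (x : Fin (n+1)) (π : Equiv.Perm (Fin n)) : Equiv.Perm (Fin (n+1)) :=
  Equiv.ofBijective (insFun x π) (Finite.injective_iff_bijective.1 (insFun_inj x π))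

@[simp] theorem ins_last {n : ℕ} (x : Fin (n+1)) (π : Equiv.Perm (Fin n)) :
    ins x π (Fin.last n) = x := by simp [ins, insFun]

@[simp] theorem ins_cast {n : ℕ} (x : Fin (n+1)) (π : Equiv.Perm (Fin n)) (i : Fin n) :
    ins x π i.castSucc = x.succAbove (π i) := by simp [ins, insFun]

theorem ins_bij (n : ℕ) :
    Function.Bijective (fun p : Equiv.Perm (Fin n) × Fin (n+1) => ins p.2 p.1) := by
  rw [Fintype.bijective_iff_injective_and_card]
  constructor
  · rintro ⟨π, x⟩ ⟨ρ, y⟩ h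
    simp only at h
    have hx : x = y := by
      have := congrArg (fun e => e (Fin.last n)) h
      simpa using this
    subst hx
    have : π = ρ := by
      ext1 i
      have := congrArg (fun e => e i.castSucc) h
      simpa using this
    rw [this]
  · simp [Fintype.card_perm, Nat.factorial_succ, mul_comm]

noncomputable def KS {n : ℕ} (π : Equiv.Perm (Fin n)) : Finset (Fin n) :=
  Finset.univ.filter (fun i => 0 < (i:ℕ) ∧ ¬ LeftE π i ∧ ¬ RightE π i)

noncomputable def KX {n : ℕ} (π : Equiv.Perm (Fin n)) (x : Fin (n+1)) : Finset (Fin n) :=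
  Finset.univ.filter (fun i => 0 < (i:ℕ) ∧ ∀ j : Fin n, (j:ℕ) < i →
    ((π j : ℕ) + 1 = π i → (π i : ℕ) = x) ∧ ((π i : ℕ) + 1 = π j → (π j : ℕ) = x))

theorem numKinks_eq {n : ℕ} (π : Equiv.Perm (Fin n)) : numKinks π = (KS π).card := by
  unfold numKinks KS LeftE RightE
  congr 1
  ext i
  simp only [Finset.mem_filter, Finset.mem_univ, true_and]
  constructor
  · rintro ⟨h0, h⟩
    exact ⟨h0, fun ⟨j, hj, e⟩ => (h j hj).1 e, fun ⟨j, hj, e⟩ => (h j hj).2 e⟩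
  · rintro ⟨h0, h1, h2⟩
    exact ⟨h0, fun j hj => ⟨fun e => h1 ⟨j, hj, e⟩, fun e => h2 ⟨j, hj, e⟩⟩⟩

theorem sa_adj {n : ℕ} (x : Fin (n+1)) (a b : Fin n) :
    (x.succAbove a : ℕ) + 1 ≠ (x.succAbove b : ℕ) ↔ ((a:ℕ)+1 = b → (b:ℕ) = x) := by
  simp only [Fin.succAbove, Fin.lt_def]
  split_ifs <;> simp at * <;> omega

theorem numKinks_ins {n : ℕ} (hn : 0 < n) (π : Equiv.Perm (Fin n)) (x : Fin (n+1)) :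
    numKinks (ins x π) = (KX π x).card := by
  unfold numKinks
  rw [← Finset.card_map (s := KX π x) Fin.castSuccEmb]
  apply congrArg Finset.card
  ext i
  simp only [Finset.mem_filter, Finset.mem_univ, true_and, Finset.mem_map, KX]
  induction i using Fin.lastCases with
  | last =>
    constructor
    · rintro ⟨-, h⟩
      exfalso
      have key : ∀ y : Fin (n+1), y ≠ x → (y:ℕ) + 1 ≠ x ∧ (x:ℕ) + 1 ≠ y := by
        intro y hy
        obtain ⟨j, rfl⟩ := (ins x π).surjective y
        have : j ≠ Fin.last n := by rintro rfl; simp at hy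
        have := h j (by
          have := Fin.val_lt_last this
          simpa using this)
        simpa using this
      by_cases hx : (x:ℕ) = 0
      · exact (key ⟨1, by omega⟩ (by intro e; rw [← e] at hx; simp at hx)).2 (by simp [hx])
      · have := x.2
        exact (key ⟨x - 1, by omega⟩ (by intro e; have := congrArg Fin.val e; simp at this; omega)).1
          (by simp; omega)
    · rintro ⟨a, -, h⟩
      simp at h
  | cast i =>
    constructor
    · rintro ⟨h0, h⟩
      refine ⟨i, ⟨by simpa using h0, fun j hj => ?_⟩, rfl⟩
      have := h j.castSucc (by simpa using hj)
      simp only [ins_cast] at this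
      exact ⟨(sa_adj _ _ _).1 this.1, (sa_adj _ _ _).1 this.2⟩
    · rintro ⟨a, ⟨h0, h⟩, e⟩
      have : a = i := by simpa using e
      subst this
      refine ⟨by simpa using h0, fun j hj => ?_⟩
      induction j using Fin.lastCases with
      | last => simp at hj; omega
      | cast j =>
        simp only [ins_cast]
        have := h j (by simpa using hj)
        exact ⟨(sa_adj _ _ _).2 this.1, (sa_adj _ _ _).2 this.2⟩

theorem KS_sub {n : ℕ} (π : Equiv.Perm (Fin n)) (x : Fin (n+1)) : KS π ⊆ KX π x := by
  intro i
  simp only [KS, KX, Finset.mem_filter, Finset.mem_univ, true_and]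
  rintro ⟨h0, h1, h2⟩
  exact ⟨h0, fun j hj => ⟨fun e => (h1 ⟨j, hj, e⟩).elim, fun e => (h2 ⟨j, hj, e⟩).elim⟩⟩

theorem mem_diff {n : ℕ} (π : Equiv.Perm (Fin n)) (x : Fin (n+1)) (i : Fin n) :
    i ∈ KX π x \ KS π ↔ (LeftE π i ∧ ¬ RightE π i ∧ (π i : ℕ) = x) ∨
      (¬ LeftE π i ∧ RightE π i ∧ (π i : ℕ) + 1 = x) := by
  simp only [KS, KX, Finset.mem_sdiff, Finset.mem_filter, Finset.mem_univ, true_and]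
  constructor
  · rintro ⟨⟨h0, h⟩, hk⟩
    by_cases hl : LeftE π i
    · obtain ⟨j, hj, e⟩ := id hl
      have e1 := (h j hj).1 e
      refine Or.inl ⟨hl, ?_, e1⟩
      rintro ⟨k, hk, e2⟩
      have := (h k hk).2 e2
      omega
    · have hr : RightE π i := by tauto
      obtain ⟨j, hj, e⟩ := id hr
      have e1 := (h j hj).2 e
      exact Or.inr ⟨hl, hr, by omega⟩
  · rintro (⟨hl, hr, e⟩ | ⟨hl, hr, e⟩)
    · refine ⟨⟨?_, fun j hj => ⟨fun _ => e, fun e2 => (hr ⟨j, hj, e2⟩).elim⟩⟩, by tauto⟩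
      obtain ⟨j, hj, -⟩ := hl; omega
    · refine ⟨⟨?_, fun j hj => ⟨fun e2 => (hl ⟨j, hj, e2⟩).elim, fun e2 => by omega⟩⟩, by tauto⟩
      obtain ⟨j, hj, -⟩ := hr; omega

theorem diff_le_one {n : ℕ} (π : Equiv.Perm (Fin n)) (x : Fin (n+1)) :
    (KX π x \ KS π).card ≤ 1 := by
  rw [Finset.card_le_one]
  intro a ha b hb
  rw [mem_diff] at ha hb
  have inj : ∀ a b : Fin n, (π a : ℕ) = π b → a = b := fun a b h => π.injective (Fin.ext h)
  rcases ha with ⟨hl, hr, e⟩ | ⟨hl, hr, e⟩ <;> rcases hb with ⟨hl2, hr2, e2⟩ | ⟨hl2, hr2, e2⟩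
  · exact inj _ _ (by omega)
  · exfalso
    obtain ⟨j, hj, h⟩ := hl
    obtain ⟨k, hk, h9⟩ := hr2
    have : j = b := inj _ _ (by omega)
    have : k = a := inj _ _ (by omega)
    subst_vars; omega
  · exfalso
    obtain ⟨j, hj, h⟩ := hl2
    obtain ⟨k, hk, h9⟩ := hr
    have : j = a := inj _ _ (by omega)
    have : k = b := inj _ _ (by omega)
    subst_vars; omega
  · exact inj _ _ (by omega)

theorem sum_diff {n : ℕ} (π : Equiv.Perm (Fin n)) :
    ∑ x, (KX π x \ KS π).card =
      ∑ i, if (LeftE π i ∧ ¬ RightE π i) ∨ (¬ LeftE π i ∧ RightE π i) then 1 else 0 := by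
  have : ∀ x, (KX π x \ KS π).card = ∑ i, if i ∈ KX π x \ KS π then 1 else 0 := by
    intro x; rw [Finset.card_eq_sum_ones, ← Finset.sum_filter]; congr 1; ext; simp
  simp_rw [this]
  rw [Finset.sum_comm]
  refine Finset.sum_congr rfl fun i _ => ?_
  simp_rw [mem_diff]
  by_cases hl : LeftE π i <;> by_cases hr : RightE π i <;> simp only [hl, hr, not_true, not_false_iff,
    true_and, false_and, and_false, or_false, false_or, if_false, if_true, Finset.sum_const_zero]
  · rw [Finset.sum_eq_single (π i).castSucc] <;> simp +contextual [Fin.ext_iff, eq_comm]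
  · rw [Finset.sum_eq_single (π i).succ] <;> simp +contextual [Fin.ext_iff, eq_comm]

theorem sum_LR {m : ℕ} (π : Equiv.Perm (Fin (m+1))) :
    ∑ i, (if LeftE π i then 1 else 0) + ∑ i, (if RightE π i then 1 else 0) = m := by
  rw [← Equiv.sum_comp π.symm, ← Equiv.sum_comp π.symm (fun i => if RightE π i then 1 else 0)]
  rw [Fin.sum_univ_succ, Fin.sum_univ_castSucc (fun i => if RightE π (π.symm i) then 1 else 0)]
  have h1 : ¬ LeftE π (π.symm 0) := by
    rintro ⟨j, -, h⟩; simp at h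
  have h2 : ¬ RightE π (π.symm (Fin.last m)) := by
    rintro ⟨j, -, h⟩; simp at h; omega
  rw [if_neg h1, if_neg h2, zero_add, add_zero, ← Finset.sum_add_distrib]
  have : ∀ u : Fin m, ((if LeftE π (π.symm u.succ) then 1 else 0) +
      (if RightE π (π.symm u.castSucc) then 1 else 0)) = 1 := by
    intro u
    have e1 : LeftE π (π.symm u.succ) ↔ (π.symm u.castSucc : ℕ) < π.symm u.succ := by
      constructor
      · rintro ⟨j, hj, h⟩
        have : j = π.symm u.castSucc := by
          rw [Equiv.eq_symm_apply]; ext; simpa using h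
        rwa [← this]
      · intro h; exact ⟨_, h, by simp⟩
    have e2 : RightE π (π.symm u.castSucc) ↔ (π.symm u.succ : ℕ) < π.symm u.castSucc := by
      constructor
      · rintro ⟨j, hj, h⟩
        have : j = π.symm u.succ := by
          rw [Equiv.eq_symm_apply]; ext; simpa using h.symm
        rwa [← this]
      · intro h; exact ⟨_, h, by simp⟩
    have e3 : (π.symm u.succ : ℕ) ≠ π.symm u.castSucc := by
      intro h
      have := π.symm.injective (Fin.ext h)
      simp [Fin.ext_iff] at this
    rw [e1, e2]
    split_ifs <;> omega
  simp [this]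

theorem sum_none {m : ℕ} (π : Equiv.Perm (Fin (m+1))) :
    ∑ i, (if ¬ LeftE π i ∧ ¬ RightE π i then 1 else 0) = numKinks π + 1 := by
  rw [numKinks_eq, KS, Finset.card_filter, Fin.sum_univ_succ, Fin.sum_univ_succ]
  have h : ¬ LeftE π 0 ∧ ¬ RightE π 0 := by
    constructor <;> · rintro ⟨j, hj, -⟩; simp at hj
  simp [h, add_comm]

theorem sum_diff_eq {m : ℕ} (π : Equiv.Perm (Fin (m+1))) :
    ∑ x, (KX π x \ KS π).card + 2 * (numKinks π + 1) = m + 2 := by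
  rw [sum_diff, ← sum_none]
  have h1 := sum_LR π
  have : ∑ i, ((if (LeftE π i ∧ ¬ RightE π i) ∨ (¬ LeftE π i ∧ RightE π i) then 1 else 0) +
     2 * (if ¬ LeftE π i ∧ ¬ RightE π i then 1 else 0) +
     ((if LeftE π i then 1 else 0) + (if RightE π i then 1 else 0))) = ∑ i : Fin (m+1), 2 := by
    refine Finset.sum_congr rfl fun i _ => ?_
    by_cases hl : LeftE π i <;> by_cases hr : RightE π i <;> simp [hl, hr]
  simp only [Finset.sum_add_distrib, ← Finset.mul_sum] at this
  simp only [Finset.sum_const, Finset.card_univ, Fintype.card_fin, smul_eq_mul] at this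
  omega

theorem ins_eq {m : ℕ} (π : Equiv.Perm (Fin (m+1))) (x : Fin (m+2)) :
    numKinks (ins x π) = numKinks π + (KX π x \ KS π).card := by
  rw [numKinks_ins (by omega), numKinks_eq]
  have := Finset.card_sdiff_add_card_eq_card (KS_sub π x)
  omega

theorem count_bad {m : ℕ} (π : Equiv.Perm (Fin (m+1))) :
    (Finset.univ.filter (fun x => (KX π x \ KS π).card = 1)).card + 2 * (numKinks π + 1) = m + 2 := by
  refine Eq.trans ?_ (sum_diff_eq π)
  rw [Finset.card_filter]
  congr 1
  refine Finset.sum_congr rfl fun x _ => ?_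
  have := diff_le_one π x
  split_ifs <;> omega

theorem count_good {m : ℕ} (π : Equiv.Perm (Fin (m+1))) :
    (Finset.univ.filter (fun x => (KX π x \ KS π).card = 0)).card = 2 * (numKinks π + 1) := by
  have h := count_bad π
  have h2 : (Finset.univ.filter (fun x => (KX π x \ KS π).card = 0)).card +
    (Finset.univ.filter (fun x => (KX π x \ KS π).card = 1)).card = m + 2 := by
    rw [Finset.card_filter, Finset.card_filter, ← Finset.sum_add_distrib]
    trans ∑ x : Fin (m+2), 1
    · refine Finset.sum_congr rfl fun x _ => ?_
      have := diff_le_one π x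
      split_ifs <;> omega
    · simp
  omega

theorem F_succ (n d : ℕ) : F (n+1) d =
    ∑ π : Equiv.Perm (Fin n), (Finset.univ.filter (fun x => numKinks (ins x π) = d)).card := by
  unfold F
  simp_rw [Finset.card_filter]
  rw [← (ins_bij n).sum_comp (fun π => if numKinks π = d then 1 else 0), Fintype.sum_prod_type]

theorem F_zero_succ (m : ℕ) : F (m+2) 0 = 2 * F (m+1) 0 := by
  rw [F_succ]
  unfold F
  rw [Finset.card_filter, Finset.mul_sum]
  refine Finset.sum_congr rfl fun π _ => ?_
  simp_rw [ins_eq]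
  split_ifs with h
  · have := count_good π
    simp only [h, zero_add] at *
    omega
  · simp [h]

theorem F_one_succ (m : ℕ) : F (m+2) 1 = 4 * F (m+1) 1 + m * F (m+1) 0 := by
  rw [F_succ]
  unfold F
  rw [Finset.card_filter, Finset.card_filter, Finset.mul_sum, Finset.mul_sum,
    ← Finset.sum_add_distrib]
  refine Finset.sum_congr rfl fun π _ => ?_
  simp_rw [ins_eq]
  have h1 := count_good π
  have h2 := count_bad π
  by_cases h : numKinks π = 0
  · simp only [h, zero_add] at *
    simp; omega
  · by_cases h9 : numKinks π = 1
    · simp only [h9, Nat.add_eq_left] at *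
      rw [h1]; simp
    · have : ∀ x, numKinks π + (KX π x \ KS π).card ≠ 1 := fun x => by omega
      simp only [h, h9, this]; simp

theorem nk_one (π : Equiv.Perm (Fin 1)) : numKinks π = 0 := by
  simp [numKinks]

theorem F_zero (m : ℕ) : F (m+1) 0 = 2 ^ m := by
  induction m with
  | zero => simp [F, nk_one]
  | succ k ih => rw [F_zero_succ, ih, pow_succ]; ring

theorem F_1_1 : F 1 1 = 0 := by simp [F, nk_one]

theorem F_2_1 : F 2 1 = 0 := by rw [F_one_succ 0, F_1_1]; simp

theorem mk_mul (f g : ℕ → ℚ) (k : ℚ) (h0 : g 0 = f 0) (h : ∀ n, g (n+1) = f (n+1) - k * f n) :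
    PowerSeries.mk f * (1 - PowerSeries.C k * PowerSeries.X) = PowerSeries.mk g := by
  have e : PowerSeries.mk f * (1 - PowerSeries.C k * PowerSeries.X) =
    PowerSeries.mk f - PowerSeries.C k * (PowerSeries.mk f * PowerSeries.X) := by ring
  rw [e]
  ext n
  cases n with
  | zero => simp [h0]
  | succ n => simp [h, PowerSeries.coeff_succ_mul_X]

open PowerSeries in
theorem gf_zero_and_one_kinks :
    (PowerSeries.mk fun n => if 2 ≤ n then (F n 0 : ℚ) else 0) * (1 - 2 * PowerSeries.X)
      = 2 * PowerSeries.X ^ 2 ∧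
    (PowerSeries.mk fun n => if 3 ≤ n then (F n 1 : ℚ) else 0)
        * ((1 - 2 * PowerSeries.X) ^ 2 * (1 - 4 * PowerSeries.X))
      = 2 * PowerSeries.X ^ 3 := by
  have c2 : (2 : PowerSeries ℚ) = PowerSeries.C 2 := (map_ofNat _ 2).symm
  have c4 : (4 : PowerSeries ℚ) = PowerSeries.C 4 := (map_ofNat _ 4).symm
  have fin : ∀ k, PowerSeries.mk (fun n => if n = k then (2:ℚ) else 0) = 2 * PowerSeries.X ^ k := by
    intro k
    rw [c2]
    ext n
    simp [PowerSeries.coeff_X_pow]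
  constructor
  · rw [← fin, c2]
    apply mk_mul
    · simp
    · rintro (_ | _ | n)
      · simp
      · simp [F_zero]
      · simp [F_zero]; ring
  · have e : ∀ a : PowerSeries ℚ, a * ((1 - 2 * PowerSeries.X) ^ 2 * (1 - 4 * PowerSeries.X)) =
      ((a * (1 - 4 * PowerSeries.X)) * (1 - 2 * PowerSeries.X)) * (1 - 2 * PowerSeries.X) := by
      intro a; ring
    rw [e, ← fin, c2, c4]
    rw [mk_mul _ (fun n => if 3 ≤ n then ((n:ℚ) - 2) * 2 ^ (n-2) else 0) 4,
      mk_mul _ (fun n => if 3 ≤ n then 2 ^ (n-2) else 0) 2]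
    · apply mk_mul
      · simp
      · rintro (_ | _ | _ | n)
        · simp
        · simp
        · simp
        · simp; ring
    · simp
    · rintro (_ | _ | _ | n)
      · simp
      · simp
      · simp; norm_num
      · simp; ring
    · simp
    · rintro (_ | _ | _ | n)
      · simp
      · simp
      · simp [F_one_succ 1, F_2_1, F_zero]; norm_num
      · simp [F_one_succ (n+2), F_zero]; ring
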